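/- For every σ > 0 and every x ∈ ℝ, the integral defining g(x; σ²) converges and satisfies 0 ≤ g(x; σ²) ≤ 1. (Consequently, the constrained Barankin bound BB_c(x₀) = S σ² + (N − S) σ² · (1 − ∏_{l ∈ supp(x₀)} g(x₀_l; σ²)) always lies between S σ² and N σ².) -/

import Mathlib

open MeasureTheory ProbabilityTheory Filter
open scoped ENNReal Classical

/-- The product Gaussian measure `P_x` on `ℝ^N` with mean `x` and variance `σ²` per coordinate. -/
noncomputable def gaussP (N : ℕ) (σ : ℝ) (x : Fin N → ℝ) : Measure (Fin N → ℝ) :=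
  MeasureTheory.Measure.pi fun i => gaussianReal (x i) (Real.toNNReal (σ ^ 2))

/-- The support of `x`: indices with nonzero entries. Its cardinality is `‖x‖₀`. -/
noncomputable def supp {N : ℕ} (x : Fin N → ℝ) : Finset (Fin N) :=
  Finset.univ.filter fun i => x i ≠ 0

/-- The sparse parameter set `X_S = {x : ‖x‖₀ ≤ S}`. -/
def sparseSet (N S : ℕ) : Set (Fin N → ℝ) := {x | (supp x).card ≤ S}

/-- An estimator is unbiased if each component is `P_x`-integrable with mean `x i`
for every `x ∈ X_S`. -/
def Unbiased (N S : ℕ) (σ : ℝ) (est : (Fin N → ℝ) → Fin N → ℝ) : Prop :=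
  ∀ x ∈ sparseSet N S, ∀ i,
    Integrable (fun y => est y i) (gaussP N σ x) ∧
    (∫ y, est y i ∂gaussP N σ x) = x i

/-- The MSE `ε(x; x̂) = ∫ ‖x̂(y) − x‖₂² dP_x(y)`, as an extended real. -/
noncomputable def MSE (N : ℕ) (σ : ℝ) (est : (Fin N → ℝ) → Fin N → ℝ)
    (x : Fin N → ℝ) : ℝ≥0∞ :=
  ∫⁻ y, ENNReal.ofReal (∑ i, (est y i - x i) ^ 2) ∂gaussP N σ x

/-- `g(x; σ²) = (2/√(2πσ²)) ∫₀^∞ exp(−(y²+x²)/(2σ²)) sinh(yx/σ²) tanh(yx/σ²) dy`. -/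
noncomputable def g (σ x : ℝ) : ℝ :=
  (2 / Real.sqrt (2 * Real.pi * σ ^ 2)) *
    ∫ y in Set.Ioi (0 : ℝ),
      Real.exp (-(y ^ 2 + x ^ 2) / (2 * σ ^ 2)) * Real.sinh (y * x / σ ^ 2) *
        Real.tanh (y * x / σ ^ 2)

/-! Since `sinh t * tanh t = cosh t * tanh t ^ 2`, and `exp (-(y² + x²) / (2σ²)) * cosh (yx / σ²)`
is, up to normalization, the density of `|Y|` for `Y ∼ 𝒩(x, σ²)`, the number `g(x; σ²)` is the
expectation of the even function `tanh² (Y x / σ²)`, whose values lie in `[0, 1]`. -/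

section FoldedGaussian

variable {E : Type*} [NormedAddCommGroup E] [NormedSpace ℝ E]

theorem integral_Ioi_add_comp_neg {f : ℝ → E} (hf : Integrable f) :
    ∫ y in Set.Ioi 0, (f y + f (-y)) = ∫ y, f y :=
  calc
    ∫ y in Set.Ioi 0, (f y + f (-y))
        = (∫ y in Set.Ioi 0, f y) + ∫ y in Set.Ioi 0, f (-y) :=
      integral_add hf.integrableOn hf.comp_neg.integrableOn
    _ = (∫ y in Set.Iic 0, f y) + ∫ y in Set.Ioi 0, f y := by
      rw [integral_comp_neg_Ioi, neg_zero, add_comm]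
    _ = ∫ y, f y := intervalIntegral.integral_Iic_add_Ioi hf.integrableOn hf.integrableOn

theorem gaussianPDFReal_add_gaussianPDFReal_neg (μ : ℝ) (v : NNReal) (y : ℝ) :
    gaussianPDFReal μ v y + gaussianPDFReal μ v (-y) =
      2 / Real.sqrt (2 * Real.pi * v) *
        (Real.exp (-(y ^ 2 + μ ^ 2) / (2 * v)) * Real.cosh (y * μ / v)) := by
  have exponent_pos : -(y - μ) ^ 2 / (2 * v) = -(y ^ 2 + μ ^ 2) / (2 * v) + y * μ / v := by ring
  have exponent_neg : -(-y - μ) ^ 2 / (2 * v) = -(y ^ 2 + μ ^ 2) / (2 * v) + -(y * μ / v) := by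
    ring
  rw [gaussianPDFReal, gaussianPDFReal, exponent_pos, exponent_neg, Real.exp_add, Real.exp_add,
    Real.cosh_eq]
  ring

theorem integrable_gaussianReal_iff {μ : ℝ} {v : NNReal} (hv : v ≠ 0) {f : ℝ → E} :
    Integrable f (gaussianReal μ v) ↔ Integrable fun y => gaussianPDFReal μ v y • f y := by
  rw [gaussianReal_of_var_ne_zero μ hv, integrable_withDensity_iff_integrable_smul'
    (measurable_gaussianPDF μ v) (ae_of_all _ fun _ => gaussianPDF_lt_top)]
  simp only [toReal_gaussianPDF]

theorem gaussianPDFReal_smul_add_neg_of_even {f : ℝ → E} (hf : f.Even) (μ : ℝ) (v : NNReal)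
    (y : ℝ) :
    gaussianPDFReal μ v y • f y + gaussianPDFReal μ v (-y) • f (-y) =
      (2 / Real.sqrt (2 * Real.pi * v)) •
        (Real.exp (-(y ^ 2 + μ ^ 2) / (2 * v)) * Real.cosh (y * μ / v)) • f y := by
  rw [hf.eq, ← add_smul, gaussianPDFReal_add_gaussianPDFReal_neg, mul_smul]

theorem integrable_exp_mul_cosh_smul_of_even {μ : ℝ} {v : NNReal} (hv : v ≠ 0) {f : ℝ → E}
    (hf : f.Even) (hfi : Integrable f (gaussianReal μ v)) :
    Integrable fun y =>
      (Real.exp (-(y ^ 2 + μ ^ 2) / (2 * v)) * Real.cosh (y * μ / v)) • f y := by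
  have normalization_ne_zero : 2 / Real.sqrt (2 * Real.pi * v) ≠ 0 := by positivity
  have hφ := (integrable_gaussianReal_iff hv).1 hfi
  rw [← integrable_smul_iff normalization_ne_zero]
  exact (hφ.add hφ.comp_neg).congr (ae_of_all _ (gaussianPDFReal_smul_add_neg_of_even hf μ v))

theorem integral_gaussianReal_of_even {μ : ℝ} {v : NNReal} (hv : v ≠ 0) {f : ℝ → E}
    (hf : f.Even) (hfi : Integrable f (gaussianReal μ v)) :
    ∫ y, f y ∂gaussianReal μ v =
      (2 / Real.sqrt (2 * Real.pi * v)) • ∫ y in Set.Ioi 0,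
        (Real.exp (-(y ^ 2 + μ ^ 2) / (2 * v)) * Real.cosh (y * μ / v)) • f y := by
  rw [integral_gaussianReal_eq_integral_smul hv,
    ← integral_Ioi_add_comp_neg ((integrable_gaussianReal_iff hv).1 hfi), ← integral_smul]
  simp only [gaussianPDFReal_smul_add_neg_of_even hf]

end FoldedGaussian

section TanhSq

theorem sinh_mul_tanh_eq_cosh_mul_tanh_sq (t : ℝ) :
    Real.sinh t * Real.tanh t = Real.cosh t * Real.tanh t ^ 2 := by
  have cosh_ne_zero := (Real.cosh_pos t).ne'
  rw [Real.tanh_eq_sinh_div_cosh]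
  field_simp

theorem even_tanh_mul_div_sq (a b : ℝ) : (fun y => Real.tanh (y * a / b) ^ 2).Even := fun y => by
  simp only [neg_mul, neg_div, Real.tanh_neg, neg_sq]

theorem measurable_tanh : Measurable Real.tanh := by
  simp only [funext Real.tanh_eq_sinh_div_cosh]
  fun_prop

variable {α : Type*} [MeasurableSpace α] {P : Measure α} {f : α → ℝ}

theorem integrable_tanh_sq [IsFiniteMeasure P] (hf : AEMeasurable f P) :
    Integrable (fun a => Real.tanh (f a) ^ 2) P := by
  refine .of_bound ((measurable_tanh.comp_aemeasurable hf).pow_const 2).aestronglyMeasurable 1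
    (ae_of_all _ fun a => ?_)
  rw [Real.norm_of_nonneg (sq_nonneg _)]
  exact (Real.tanh_sq_lt_one _).le

theorem integral_tanh_sq_mem_Icc [IsProbabilityMeasure P] (hf : AEMeasurable f P) :
    ∫ a, Real.tanh (f a) ^ 2 ∂P ∈ Set.Icc 0 1 := by
  refine ⟨integral_nonneg fun a => sq_nonneg _, ?_⟩
  calc
    ∫ a, Real.tanh (f a) ^ 2 ∂P ≤ ∫ _, 1 ∂P :=
      integral_mono (integrable_tanh_sq hf) (integrable_const 1) fun a =>
        (Real.tanh_sq_lt_one _).le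
    _ = 1 := by simp

end TanhSq

section BarankinBound

variable {σ : ℝ}

theorem toNNReal_sq_ne_zero (hσ : σ ≠ 0) : (σ ^ 2).toNNReal ≠ 0 :=
  (Real.toNNReal_pos.2 (by positivity)).ne'

theorem integrable_exp_mul_sinh_mul_tanh (hσ : σ ≠ 0) (x : ℝ) :
    Integrable fun y => Real.exp (-(y ^ 2 + x ^ 2) / (2 * σ ^ 2)) * Real.sinh (y * x / σ ^ 2) *
      Real.tanh (y * x / σ ^ 2) := by
  have h := integrable_exp_mul_cosh_smul_of_even (μ := x) (toNNReal_sq_ne_zero hσ)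
    (even_tanh_mul_div_sq x (σ ^ 2)) (integrable_tanh_sq (by fun_prop))
  simpa only [Real.coe_toNNReal _ (sq_nonneg σ), smul_eq_mul, mul_assoc,
    sinh_mul_tanh_eq_cosh_mul_tanh_sq] using h

theorem g_eq_integral_tanh_sq (hσ : σ ≠ 0) (x : ℝ) :
    g σ x = ∫ y, Real.tanh (y * x / σ ^ 2) ^ 2 ∂gaussianReal x (σ ^ 2).toNNReal := by
  rw [integral_gaussianReal_of_even (toNNReal_sq_ne_zero hσ) (even_tanh_mul_div_sq x (σ ^ 2))
    (integrable_tanh_sq (by fun_prop)), g]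
  simp only [Real.coe_toNNReal _ (sq_nonneg σ), smul_eq_mul, mul_assoc,
    sinh_mul_tanh_eq_cosh_mul_tanh_sq]

theorem g_mem_Icc (hσ : σ ≠ 0) (x : ℝ) : g σ x ∈ Set.Icc 0 1 := by
  rw [g_eq_integral_tanh_sq hσ]
  exact integral_tanh_sq_mem_Icc (by fun_prop)

/-- The constrained Barankin bound `BB_c(x₀)` for estimating an `S`-sparse vector in `ℝ^N`, encoded
by its closed form in terms of `g`. The difference `N - S` is taken in `ℝ`, without truncation. -/
noncomputable def constrainedBarankinBound (N S : ℕ) (σ : ℝ) (x₀ : Fin N → ℝ) : ℝ :=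
  (S : ℝ) * σ ^ 2 + ((N : ℝ) - S) * σ ^ 2 * (1 - ∏ l ∈ supp x₀, g σ (x₀ l))

theorem constrainedBarankinBound_mem_Icc (hσ : σ ≠ 0) {N S : ℕ} (hSN : S ≤ N) (x₀ : Fin N → ℝ) :
    constrainedBarankinBound N S σ x₀ ∈ Set.Icc (S * σ ^ 2) (N * σ ^ 2) := by
  have prod_nonneg : 0 ≤ ∏ l ∈ supp x₀, g σ (x₀ l) :=
    Finset.prod_nonneg fun l _ => (g_mem_Icc hσ (x₀ l)).1
  have prod_le_one : ∏ l ∈ supp x₀, g σ (x₀ l) ≤ 1 :=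
    Finset.prod_le_one (fun l _ => (g_mem_Icc hσ (x₀ l)).1) fun l _ => (g_mem_Icc hσ (x₀ l)).2
  have excess_nonneg : 0 ≤ ((N : ℝ) - S) * σ ^ 2 :=
    mul_nonneg (sub_nonneg.2 (Nat.cast_le.2 hSN)) (sq_nonneg σ)
  rw [constrainedBarankinBound]
  constructor
  · linarith [mul_nonneg excess_nonneg (sub_nonneg.2 prod_le_one)]
  · linarith [mul_nonneg excess_nonneg prod_nonneg]

end BarankinBound

/-- The integral defining `g(x; σ²)` converges, and `0 ≤ g(x; σ²) ≤ 1`. Consequently the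
constrained Barankin bound `BB_c(x₀)` always lies between `S σ²` and `N σ²`. -/
theorem stmt_14 (σ : ℝ) (hσ : 0 < σ) (x : ℝ) :
    MeasureTheory.IntegrableOn
      (fun y => Real.exp (-(y ^ 2 + x ^ 2) / (2 * σ ^ 2)) * Real.sinh (y * x / σ ^ 2) *
        Real.tanh (y * x / σ ^ 2)) (Set.Ioi (0 : ℝ)) ∧
    0 ≤ g σ x ∧ g σ x ≤ 1 ∧
    ∀ (N S : ℕ), S ≤ N → ∀ x₀ : Fin N → ℝ,
      (S : ℝ) * σ ^ 2
          ≤ (S : ℝ) * σ ^ 2 + ((N : ℝ) - S) * σ ^ 2 * (1 - ∏ l ∈ supp x₀, g σ (x₀ l)) ∧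
      (S : ℝ) * σ ^ 2 + ((N : ℝ) - S) * σ ^ 2 * (1 - ∏ l ∈ supp x₀, g σ (x₀ l))
          ≤ (N : ℝ) * σ ^ 2 :=
  ⟨(integrable_exp_mul_sinh_mul_tanh hσ.ne' x).integrableOn, (g_mem_Icc hσ.ne' x).1,
    (g_mem_Icc hσ.ne' x).2, fun _ _ hSN x₀ => constrainedBarankinBound_mem_Icc hσ.ne' hSN x₀⟩
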